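/- Let G be a k-connected finite simple graph with minimum degree δ(G) ≥ ⌊3k/2⌋ + m − 1, let S be a separating set of G with |S| = k, and let F be a fragment of G to S. If W is a subgraph of G − (S ∪ V(F)) of order at most m and the graph G[S] − V(F ∪ W) is k-connected, then G − V(W) is k-connected. -/

import Mathlib

/-- A graph `G` is `k`-connected if it has at least `k+1` vertices and
deleting any set of fewer than `k` vertices leaves a connected graph. -/
def KConnected {V : Type*} (G : SimpleGraph V) (k : ℕ) : Prop :=
  k + 1 ≤ Nat.card V ∧
    ∀ X : Finset V, X.card < k → (G.induce ((X : Set V)ᶜ)).Connected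

/-- `G[S]`: the graph obtained from `G` by adding all edges between pairs of
vertices of `S`. -/
def addClique {V : Type*} (G : SimpleGraph V) (S : Set V) : SimpleGraph V :=
  G ⊔ SimpleGraph.fromRel fun a b => a ∈ S ∧ b ∈ S

/-- `F` is a fragment of `G` to `S`: a nonempty union of connected components
of `G - S` (i.e. a nonempty subset of `Sᶜ` with no edge to the rest of
`G - S`) such that `G - S - F` is nonempty. -/
def IsFragment {V : Type*} (G : SimpleGraph V) (S F : Set V) : Prop :=
  F.Nonempty ∧ F ⊆ Sᶜ ∧ (Sᶜ \ F).Nonempty ∧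
    ∀ u ∈ F, ∀ v ∈ Sᶜ \ F, ¬ G.Adj u v

/-!
Let `(A, X, B)` separate `G - W` with `|X| < k`, and let `R` be the part of `G` outside `S ∪ F`.
If `A` meets `F`, the neighbours of `A ∩ F` in `G` lie in `F ∪ S`, so `(X ∩ F) ∪ (S \ B)` cuts it
off from `S ∩ B`; as `|S| = k`, connectivity of `G` forces `|S ∩ B| ≤ |X ∩ F|`. The
`k`-connectedness of `G[S] - (F ∪ W)` gives the same bound for `R`, and both bounds hold with `A`
and `B` exchanged. Say `|S ∩ B| ≤ |S ∩ A|`, so that `|S ∩ B| ≤ k / 2`. A side `F` or `R` that meets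
neither `A` nor `B` contains at least `k / 2` vertices of `X` by the degree condition, so
`|S ∩ B|` is at most `|X ∩ F|` and at most `|X ∩ R|` in every case. On the other hand
`|X ∩ F| + |X ∩ R| < |S ∩ A| + |S ∩ B|` because `|X| < |S|`. Hence neither `|X ∩ F|` nor `|X ∩ R|`
reaches `|S ∩ A|`, so `B` meets neither side and `B ⊆ S`. A vertex of `B` then has its closed
neighbourhood in `B ∪ X ∪ W`, which is too small for the degree condition.
-/

section

variable {V : Type*} {G H : SimpleGraph V} {k : ℕ} {S F W U T C A X B : Set V}

theorem preconnected_iff_forall_exists_adj :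
    G.Preconnected ↔
      ∀ P : Set V, P.Nonempty → Pᶜ.Nonempty → ∃ u ∈ P, ∃ v ∈ Pᶜ, G.Adj u v := by
  constructor
  · rintro hG P ⟨p, hp⟩ ⟨q, hq⟩
    obtain ⟨walk⟩ := hG p q
    obtain ⟨d, -, hfst, hsnd⟩ := walk.exists_boundary_dart P hp hq
    exact ⟨d.fst, hfst, d.snd, hsnd, d.adj⟩
  · intro hG p q
    by_contra hpq
    obtain ⟨u, hu, v, hv, huv⟩ := hG {x | G.Reachable p x} ⟨p, .refl p⟩ ⟨q, hpq⟩
    exact hv (hu.trans huv.reachable)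

/-- `(A, X, B)` is a vertex separation of the subgraph of `G` induced on `U`: the three sets
partition `U`, and `A` and `B` are nonempty with no edge between them. All sets live in the
ambient vertex type, so that separations of different induced subgraphs can be compared. -/
structure IsSeparation (G : SimpleGraph V) (U A X B : Set V) : Prop where
  union_eq : A ∪ X ∪ B = U
  disjoint_left : Disjoint A X
  disjoint_right : Disjoint X B
  disjoint_sides : Disjoint A B
  left_nonempty : A.Nonempty
  right_nonempty : B.Nonempty
  not_adj : ∀ u ∈ A, ∀ v ∈ B, ¬ G.Adj u v

namespace IsSeparation

theorem symm (h : IsSeparation G U A X B) : IsSeparation G U B X A where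
  union_eq := by rw [← h.union_eq, Set.union_comm, ← Set.union_assoc, Set.union_right_comm]
  disjoint_left := h.disjoint_right.symm
  disjoint_right := h.disjoint_left.symm
  disjoint_sides := h.disjoint_sides.symm
  left_nonempty := h.right_nonempty
  right_nonempty := h.left_nonempty
  not_adj u hu v hv huv := h.not_adj v hv u hu huv.symm

theorem mem_left_or_mem_separator_of_adj (h : IsSeparation G U A X B) {u v : V} (hu : u ∈ A)
    (hv : v ∈ U) (huv : G.Adj u v) : v ∈ A ∨ v ∈ X := by
  rw [← h.union_eq] at hv
  exact hv.resolve_right fun hvB => h.not_adj u hu v hvB huv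

theorem not_connected_induce_compl (h : IsSeparation G U A X B) :
    ¬ ((G.induce U).induce (Subtype.val ⁻¹' X)ᶜ).Connected := by
  intro hconn
  obtain ⟨a, ha⟩ := h.left_nonempty
  obtain ⟨b, hb⟩ := h.right_nonempty
  have haU : a ∈ U := h.union_eq ▸ Or.inl (Or.inl ha)
  have hbU : b ∈ U := h.union_eq ▸ Or.inr hb
  obtain ⟨u, hu, v, hv, huv⟩ := preconnected_iff_forall_exists_adj.1 hconn.preconnected
    {x | (x : V) ∈ A} ⟨⟨⟨a, haU⟩, h.disjoint_left.notMem_of_mem_left ha⟩, ha⟩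
    ⟨⟨⟨b, hbU⟩, h.disjoint_right.notMem_of_mem_right hb⟩, h.disjoint_sides.notMem_of_mem_right hb⟩
  exact (h.mem_left_or_mem_separator_of_adj hu v.1.2 huv).elim hv v.2

theorem exists_of_not_preconnected_induce_compl {Y : Set U}
    (hY : ¬ ((G.induce U).induce Yᶜ).Preconnected) :
    ∃ A B, IsSeparation G U A (Subtype.val '' Y) B := by
  rw [preconnected_iff_forall_exists_adj] at hY
  push Not at hY
  obtain ⟨P, hP, hPc, hadj⟩ := hY
  refine ⟨Subtype.val '' (Subtype.val '' P), Subtype.val '' (Subtype.val '' Pᶜ), ?_, ?_, ?_, ?_,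
    (hP.image _).image _, (hPc.image _).image _, ?_⟩
  · rw [← Set.image_union, ← Set.image_union, Set.union_right_comm, ← Set.image_union,
      Set.union_compl_self, Set.image_univ, Subtype.range_coe, Set.compl_union_self,
      Set.image_univ, Subtype.range_coe]
  · exact (Set.disjoint_image_iff Subtype.val_injective).2
      (Set.disjoint_left.2 fun _ ⟨x, _, hx⟩ => hx ▸ x.2)
  · exact (Set.disjoint_image_iff Subtype.val_injective).2
      (Set.disjoint_right.2 fun _ ⟨x, _, hx⟩ => hx ▸ x.2)
  · exact (Set.disjoint_image_iff Subtype.val_injective).2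
      ((Set.disjoint_image_iff Subtype.val_injective).2 disjoint_compl_right)
  · rintro _ ⟨_, ⟨u, hu, rfl⟩, rfl⟩ _ ⟨_, ⟨v, hv, rfl⟩, rfl⟩
    exact hadj u hu v hv

end IsSeparation

theorem kConnected_induce_iff :
    KConnected (G.induce U) k ↔
      k + 1 ≤ U.ncard ∧ ∀ A X B, IsSeparation G U A X B → k ≤ X.ncard := by
  rw [KConnected, Nat.card_coe_set_eq]
  refine and_congr_right fun hU => ⟨fun hconn A X B hsep => ?_, fun hsep Y hY => ?_⟩
  · by_contra! hX
    have hXU : X ⊆ U := hsep.union_eq ▸ fun v hv => Or.inl (Or.inr hv)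
    have := (Set.finite_of_ncard_pos (Nat.zero_lt_of_lt hU)).to_subtype
    have hfin := Set.toFinite (Subtype.val ⁻¹' X : Set U)
    have hcard : hfin.toFinset.card = X.ncard := by
      rw [← Set.ncard_eq_toFinset_card _ hfin, Set.ncard_preimage_of_injective_subset_range
        Subtype.val_injective (by simpa using hXU)]
    have hconnX := hconn hfin.toFinset (hcard.trans_lt hX)
    rw [hfin.coe_toFinset] at hconnX
    exact hsep.not_connected_induce_compl hconnX
  · have hnonempty : Nonempty ((Y : Set U)ᶜ : Set U) := by
      have hYU : (Y : Set U).ncard < Nat.card U := by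
        rw [Set.ncard_coe_finset, Nat.card_coe_set_eq]
        omega
      exact (Set.nonempty_compl.2 fun h => by simp [h] at hYU).to_subtype
    refine ⟨?_⟩
    by_contra hdisc
    obtain ⟨A, B, hAB⟩ := IsSeparation.exists_of_not_preconnected_induce_compl hdisc
    have := hsep _ _ _ hAB
    rw [Set.ncard_image_of_injective _ Subtype.val_injective, Set.ncard_coe_finset] at this
    omega

namespace KConnected

theorem of_iso {V' : Type*} {G' : SimpleGraph V'} (hG : KConnected G k) (e : G ≃g G') :
    KConnected G' k := by
  refine ⟨hG.1.trans_eq (Nat.card_congr e.toEquiv), fun X hX => ?_⟩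
  have hmaps : Set.MapsTo e ((X.map e.symm.toEquiv.toEmbedding : Finset V) : Set V)ᶜ
      (X : Set V')ᶜ := fun v hv hvX => hv (by simpa using ⟨e v, hvX, e.symm_apply_apply v⟩)
  refine (hG.2 _ (by rwa [Finset.card_map])).map (SimpleGraph.induceHom e.toHom hmaps)
    fun ⟨y, hy⟩ => ⟨⟨e.symm y, ?_⟩, Subtype.ext (e.apply_symm_apply y)⟩
  simpa using hy

theorem le_ncard_of_adj_mem_union {P Y : Set V} (hG : KConnected (G.induce U) k)
    (hP : P.Nonempty) (hPU : P ⊆ U) (hYU : Y ⊆ U) (hPY : Disjoint P Y)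
    (hrest : (U \ (P ∪ Y)).Nonempty) (hadj : ∀ u ∈ P, ∀ v ∈ U, G.Adj u v → v ∈ P ∪ Y) :
    k ≤ Y.ncard :=
  (kConnected_induce_iff.1 hG).2 P Y (U \ (P ∪ Y))
    { union_eq := Set.union_sdiff_cancel (Set.union_subset hPU hYU)
      disjoint_left := hPY
      disjoint_right := Set.disjoint_sdiff_right.mono_left Set.subset_union_right
      disjoint_sides := Set.disjoint_sdiff_right.mono_left Set.subset_union_left
      left_nonempty := hP
      right_nonempty := hrest
      not_adj := fun u hu v hv huv => hv.2 (hadj u hu v hv.1 huv) }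

end KConnected

/-- Whenever `(A, X, B)` separates the subgraph of `G` induced on `U` and `A` meets `C`, the
separator `X` has at least as many vertices in `C` as `B` has in `S`. For `C` a side of the cut
`S`, this is all that the counting argument needs to know about connectivity. -/
def HasCrossingBound (G : SimpleGraph V) (U S C : Set V) : Prop :=
  ∀ ⦃A X B : Set V⦄, IsSeparation G U A X B → (A ∩ C).Nonempty →
    (S ∩ B).ncard ≤ (X ∩ C).ncard

theorem HasCrossingBound.of_kConnected [Finite V] (hH : KConnected (H.induce T) S.ncard)
    (hST : S ⊆ T) (hCT : C ∩ U ⊆ T) (hCS : Disjoint C S)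
    (hadj : ∀ u ∈ C, ∀ v ∈ T, H.Adj u v → G.Adj u v ∧ v ∈ U ∩ (C ∪ S)) :
    HasCrossingBound G U S C := by
  intro A X B hsep hAC
  rcases (S ∩ B).eq_empty_or_nonempty with hSB | ⟨s, hsS, hsB⟩
  · simp [hSB]
  have hcut : S.ncard ≤ (X ∩ C ∪ S \ B).ncard := by
    have hAU : A ∪ X ⊆ U := hsep.union_eq ▸ Set.subset_union_left
    have hsA := hsep.disjoint_sides.notMem_of_mem_right hsB
    have hsX := hsep.disjoint_right.notMem_of_mem_right hsB
    refine hH.le_ncard_of_adj_mem_union hAC (fun v hv => hCT ⟨hv.2, hAU (Or.inl hv.1)⟩)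
      (Set.union_subset (fun v hv => hCT ⟨hv.2, hAU (Or.inr hv.1)⟩) (Set.sdiff_subset.trans hST))
      ?_ ⟨s, hST hsS, by grind⟩ ?_
    · exact Set.disjoint_union_right.2
        ⟨hsep.disjoint_left.mono Set.inter_subset_left Set.inter_subset_left,
          hCS.mono Set.inter_subset_right Set.sdiff_subset⟩
    · intro u hu v hvT huv
      obtain ⟨hGuv, hvU, hvCS⟩ := hadj u hu.2 v hvT huv
      have hvAX := hsep.mem_left_or_mem_separator_of_adj hu.1 hvU hGuv
      have hvB : v ∉ B := fun hvB => hsep.not_adj u hu.1 v hvB hGuv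
      grind
  have hunion := Set.ncard_union_le (X ∩ C) (S \ B)
  have hsplit := Set.ncard_inter_add_ncard_sdiff_eq_ncard S B
  omega

theorem degree_lt_ncard_of_adj_mem {v : V} [Fintype (G.neighborSet v)] {N : Set V} (hN : N.Finite)
    (hv : v ∈ N) (hadj : ∀ u, G.Adj v u → u ∈ N) : G.degree v < N.ncard := by
  rw [← G.card_neighborSet_eq_degree, ← Nat.card_eq_fintype_card, Nat.card_coe_set_eq]
  exact Set.ncard_lt_ncard ⟨hadj, fun h => G.irrefl (h hv)⟩ hN

namespace IsFragment

theorem mem_union_of_adj (hF : IsFragment G S F) {u v : V} (hu : u ∈ F) (huv : G.Adj u v) :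
    v ∈ F ∪ S := by
  by_contra hv
  rw [Set.mem_union, not_or] at hv
  exact hF.2.2.2 u hu v ⟨hv.2, hv.1⟩ huv

theorem compl (hF : IsFragment G S F) : IsFragment G S (S ∪ F)ᶜ := by
  obtain ⟨hne, hFS, hrest, hadj⟩ := hF
  have hcompl : Sᶜ \ (S ∪ F)ᶜ = F := by grind
  rw [IsFragment, hcompl]
  refine ⟨by rwa [Set.compl_union], by grind, hne, fun u hu v hv huv => ?_⟩
  exact hadj v hv u (by grind) huv.symm

theorem ncard_separator_lt_ncard_union [Finite V] (hF : IsFragment G S F) :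
    S.ncard < (S ∪ F).ncard := by
  obtain ⟨⟨f, hf⟩, hFS, -⟩ := hF
  exact Set.ncard_lt_ncard ⟨Set.subset_union_left, fun h => hFS hf (h (Or.inr hf))⟩

theorem hasCrossingBound [Finite V] (hF : IsFragment G S F) (hG : KConnected G S.ncard)
    (hW : W ⊆ (S ∪ F)ᶜ) : HasCrossingBound G Wᶜ S F := by
  refine .of_kConnected (hG.of_iso G.induceUnivIso.symm) (Set.subset_univ S) (Set.subset_univ _)
    (Set.disjoint_left.2 hF.2.1) fun u hu v _ huv => ?_
  have hv := hF.mem_union_of_adj hu huv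
  exact ⟨huv, fun hvW => hW hvW hv.symm, hv⟩

theorem hasCrossingBound_compl [Finite V] (hF : IsFragment G S F) (hW : W ⊆ (S ∪ F)ᶜ)
    (hH : KConnected ((addClique G S).induce (F ∪ W)ᶜ) S.ncard) :
    HasCrossingBound G Wᶜ S (S ∪ F)ᶜ := by
  have hFS := hF.2.1
  have hSH : S ⊆ (F ∪ W)ᶜ := fun v hvS hv => hv.elim (hFS · hvS) (hW · (Or.inl hvS))
  refine .of_kConnected hH hSH (by grind)
    (Set.disjoint_left.2 hF.compl.2.1) fun u hu v hv huv => ?_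
  have huv : G.Adj u v := by
    simp only [addClique, SimpleGraph.sup_adj, SimpleGraph.fromRel_adj] at huv
    grind
  exact ⟨huv, fun hvW => hv (Or.inr hvW), hF.compl.mem_union_of_adj hu huv⟩

theorem half_ncard_le_ncard_inter [Finite V] [G.LocallyFinite] (hF : IsFragment G S F)
    (hδ : ∀ v, 3 * S.ncard / 2 + W.ncard ≤ G.degree v + 1) (hFXW : F ⊆ X ∪ W) :
    S.ncard / 2 ≤ (X ∩ F).ncard := by
  obtain ⟨v, hv⟩ := hF.1
  have hdeg : G.degree v < (F ∪ S).ncard :=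
    degree_lt_ncard_of_adj_mem (Set.toFinite _) (Or.inl hv) fun u => hF.mem_union_of_adj hv
  have hFS := Set.ncard_union_le F S
  have hF_le : F.ncard ≤ (X ∩ F).ncard + W.ncard :=
    (Set.ncard_le_ncard (by grind)).trans (Set.ncard_union_le (X ∩ F) W)
  have := hδ v
  omega

end IsFragment

namespace IsSeparation

theorem ncard_inter_sides_add [Finite V] (h : IsSeparation G U A X B) (hSU : S ⊆ U) :
    (S ∩ A).ncard + (S ∩ B).ncard + (X ∩ S).ncard = S.ncard := by
  have hsplit : S = S ∩ A ∪ S ∩ B ∪ X ∩ S := by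
    grind [h.union_eq]
  conv_rhs => rw [hsplit]
  rw [Set.ncard_union_eq, Set.ncard_union_eq]
  · exact h.disjoint_sides.mono Set.inter_subset_right Set.inter_subset_right
  · exact Set.disjoint_union_left.2
      ⟨h.disjoint_left.mono Set.inter_subset_right Set.inter_subset_left,
        h.disjoint_right.symm.mono Set.inter_subset_right Set.inter_subset_left⟩

theorem ncard_separator_inter_add_lt [Finite V] (h : IsSeparation G U A X B) (hSU : S ⊆ U)
    (hFS : F ⊆ Sᶜ) (hX : X.ncard < S.ncard) :
    (X ∩ F).ncard + (X ∩ (S ∪ F)ᶜ).ncard < (S ∩ A).ncard + (S ∩ B).ncard := by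
  have hsum := h.ncard_inter_sides_add hSU
  have hXS := Set.ncard_inter_add_ncard_sdiff_eq_ncard X S
  have hXF := Set.ncard_inter_add_ncard_sdiff_eq_ncard (X \ S) F
  have hinter : X \ S ∩ F = X ∩ F := by grind
  have hsdiff : (X \ S) \ F = X ∩ (S ∪ F)ᶜ := by grind
  rw [hinter, hsdiff] at hXF
  omega

theorem min_ncard_inter_le [Finite V] [G.LocallyFinite] (h : IsSeparation G Wᶜ A X B)
    (hSW : S ⊆ Wᶜ) (hC : IsFragment G S C) (hbound : HasCrossingBound G Wᶜ S C)
    (hδ : ∀ v, 3 * S.ncard / 2 + W.ncard ≤ G.degree v + 1) :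
    min (S ∩ A).ncard (S ∩ B).ncard ≤ (X ∩ C).ncard := by
  by_cases hA : (A ∩ C).Nonempty
  · exact min_le_of_right_le (hbound h hA)
  by_cases hB : (B ∩ C).Nonempty
  · exact min_le_of_left_le (hbound h.symm hB)
  have hCXW : C ⊆ X ∪ W := by
    intro v hv
    by_contra hvXW
    rw [Set.mem_union, not_or] at hvXW
    obtain (hvA | hvX) | hvB : v ∈ A ∪ X ∪ B := h.union_eq ▸ hvXW.2
    exacts [hA ⟨v, hvA, hv⟩, hvXW.1 hvX, hB ⟨v, hvB, hv⟩]
  have hhalf := hC.half_ncard_le_ncard_inter hδ hCXW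
  have hsum := h.ncard_inter_sides_add hSW
  omega

theorem not_right_subset_of_ncard_le [Finite V] [G.LocallyFinite] (h : IsSeparation G Wᶜ A X B)
    (hSW : S ⊆ Wᶜ) (hle : (S ∩ B).ncard ≤ (S ∩ A).ncard) (hX : X.ncard < S.ncard)
    (hδ : ∀ v, 3 * S.ncard / 2 + W.ncard ≤ G.degree v + 1) : ¬ B ⊆ S := by
  intro hBS
  obtain ⟨v, hv⟩ := h.right_nonempty
  have hdeg : G.degree v < (B ∪ X ∪ W).ncard := by
    refine degree_lt_ncard_of_adj_mem (Set.toFinite _) (Or.inl (Or.inl hv)) fun u hvu => ?_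
    by_cases huW : u ∈ W
    · exact Or.inr huW
    · exact Or.inl (h.symm.mem_left_or_mem_separator_of_adj hv huW hvu)
  have hBXW := Set.ncard_union_le (B ∪ X) W
  have hBX := Set.ncard_union_le B X
  have hsum := h.ncard_inter_sides_add hSW
  rw [Set.inter_eq_right.2 hBS] at hsum hle
  have := hδ v
  omega

end IsSeparation

theorem IsFragment.ncard_le_ncard_separator_of_le [Finite V] [G.LocallyFinite]
    (hF : IsFragment G S F) (hSW : S ⊆ Wᶜ) (hboundF : HasCrossingBound G Wᶜ S F)
    (hboundR : HasCrossingBound G Wᶜ S (S ∪ F)ᶜ)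
    (hδ : ∀ v, 3 * S.ncard / 2 + W.ncard ≤ G.degree v + 1) (h : IsSeparation G Wᶜ A X B)
    (hle : (S ∩ B).ncard ≤ (S ∩ A).ncard) : S.ncard ≤ X.ncard := by
  by_contra! hX
  have hlt := h.ncard_separator_inter_add_lt hSW hF.2.1 hX
  have hminF := h.min_ncard_inter_le hSW hF hboundF hδ
  have hminR := h.min_ncard_inter_le hSW hF.compl hboundR hδ
  have hBF : ¬ (B ∩ F).Nonempty := fun hBF => by
    have := hboundF h.symm hBF
    omega
  have hBR : ¬ (B ∩ (S ∪ F)ᶜ).Nonempty := fun hBR => by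
    have := hboundR h.symm hBR
    omega
  have hBS : B ⊆ S := by
    intro v hv
    by_contra hvS
    by_cases hvF : v ∈ F
    · exact hBF ⟨v, hv, hvF⟩
    · exact hBR ⟨v, hv, fun hvSF => hvSF.elim hvS hvF⟩
  exact h.not_right_subset_of_ncard_le hSW hle hX hδ hBS

theorem IsFragment.ncard_le_ncard_separator [Finite V] [G.LocallyFinite]
    (hF : IsFragment G S F) (hSW : S ⊆ Wᶜ) (hboundF : HasCrossingBound G Wᶜ S F)
    (hboundR : HasCrossingBound G Wᶜ S (S ∪ F)ᶜ)
    (hδ : ∀ v, 3 * S.ncard / 2 + W.ncard ≤ G.degree v + 1) (h : IsSeparation G Wᶜ A X B) :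
    S.ncard ≤ X.ncard := by
  rcases le_total (S ∩ B).ncard (S ∩ A).ncard with hle | hle
  · exact hF.ncard_le_ncard_separator_of_le hSW hboundF hboundR hδ h hle
  · exact hF.ncard_le_ncard_separator_of_le hSW hboundF hboundR hδ h.symm hle

end

/-- Let `G` be `k`-connected with `δ(G) ≥ ⌊3k/2⌋ + m - 1`, `S` a separating
set with `|S| = k`, and `F` a fragment of `G` to `S`. If `W ⊆ G - (S ∪ V(F))`
has order at most `m` and `G[S] - V(F ∪ W)` is `k`-connected, then `G - V(W)`
is `k`-connected. -/
theorem stmt_4 {V : Type*} [Fintype V] [DecidableEq V] (G : SimpleGraph V)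
    [DecidableRel G.Adj] (k m : ℕ)
    (hG : KConnected G k)
    (hδ : ∀ v : V, 3 * k / 2 + m - 1 ≤ G.degree v)
    (S F : Set V) (hsep : ¬ (G.induce (Sᶜ)).Connected) (hS : S.ncard = k)
    (hF : IsFragment G S F)
    (W : Set V) (hW : W ⊆ (S ∪ F)ᶜ) (hWcard : W.ncard ≤ m)
    (hkc : KConnected ((addClique G S).induce ((F ∪ W)ᶜ)) k) :
    KConnected (G.induce (Wᶜ)) k := by
  subst hS
  have hSFW : S ∪ F ⊆ Wᶜ := Set.subset_compl_comm.1 hW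
  have hdeg (v : V) : 3 * S.ncard / 2 + W.ncard ≤ G.degree v + 1 := by
    have := hδ v
    omega
  refine kConnected_induce_iff.2 ⟨?_, fun A X B hsepAB => ?_⟩
  · exact hF.ncard_separator_lt_ncard_union.trans_le (Set.ncard_le_ncard hSFW)
  · exact hF.ncard_le_ncard_separator (Set.subset_union_left.trans hSFW)
      (hF.hasCrossingBound hG hW) (hF.hasCrossingBound_compl hW hkc) hdeg hsepAB
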